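/- arXiv:0708.1922 — 5 statements merged into one kernel-verified Lean document; each statement's English description precedes it below -/
import Mathlib

section
/- For any A_0, B_0, C_0 > 0, the functions A(t) = A_0 (1 + 7 R_0^2 t)^{-1/14}, B(t) = B_0 (1 + 7 R_0^2 t)^{3/14}, C(t) = C_0 (1 + 7 R_0^2 t)^{3/14}, where R_0 = -2 A_0/(B_0 C_0), are defined and positive for all t ≥ 0, satisfy A(0) = A_0, B(0) = B_0, C(0) = C_0, and solve the Heisenberg negative cross curvature flow ODE system on [0, ∞). -/
/-!
In terms of the scalar curvature `R = -2A/(BC)` the system reads `A' = -(1/2) R² A`,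
`B' = (3/2) R² B`, `C' = (3/2) R² C`. Put `u = 1 + 7 R0² t`. For `A`, `B`, `C` proportional to
`u ^ (-1/14)`, `u ^ (3/14)`, `u ^ (3/14)`, the curvature is proportional to `u ^ (-1/2)`, hence
`R² = R0² / u`. On the other hand every multiple `X` of `u ^ p` satisfies
`X' = (7 p R0² / u) X = 7 p R² X`, and `7 p` is `-1/2` for `A` and `3/2` for `B` and `C`.
-/

/-- The scalar curvature of the left-invariant metric on the Heisenberg group with coefficients
`a`, `b`, `c` in a Milnor frame, where `a` belongs to the central direction. The negative
cross curvature flow scales each coefficient at a constant multiple of its square. -/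
noncomputable def heisenbergScalarCurvature (a b c : ℝ) : ℝ :=
  -2 * a / (b * c)

namespace heisenbergScalarCurvature

theorem swap (a b c : ℝ) :
    heisenbergScalarCurvature a b c = heisenbergScalarCurvature a c b := by
  rw [heisenbergScalarCurvature, heisenbergScalarCurvature, mul_comm b c]

theorem neg_half_mul_sq_mul_center (a b c : ℝ) :
    -1 / 2 * heisenbergScalarCurvature a b c ^ 2 * a = -2 * a ^ 3 / (b ^ 2 * c ^ 2) := by
  rw [heisenbergScalarCurvature]
  ring

theorem three_halves_mul_sq_mul_left (a c : ℝ) {b : ℝ} (hb : b ≠ 0) :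
    3 / 2 * heisenbergScalarCurvature a b c ^ 2 * b = 6 * a ^ 2 / (b * c ^ 2) := by
  rw [heisenbergScalarCurvature]
  field

theorem three_halves_mul_sq_mul_right (a b : ℝ) {c : ℝ} (hc : c ≠ 0) :
    3 / 2 * heisenbergScalarCurvature a b c ^ 2 * c = 6 * a ^ 2 / (b ^ 2 * c) := by
  rw [swap, three_halves_mul_sq_mul_left a b hc, mul_comm c]

theorem mul_rpow (a b c p q r : ℝ) {u : ℝ} (hu : 0 < u) :
    heisenbergScalarCurvature (a * u ^ p) (b * u ^ q) (c * u ^ r) =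
      heisenbergScalarCurvature a b c * u ^ (p - q - r) := by
  rw [heisenbergScalarCurvature, heisenbergScalarCurvature, Real.rpow_sub hu, Real.rpow_sub hu]
  ring

theorem sq_mul_rpow_of_sub_sub_eq_neg_half (a b c : ℝ) {p q r u : ℝ} (hu : 0 < u)
    (hpqr : p - q - r = -1 / 2) :
    heisenbergScalarCurvature (a * u ^ p) (b * u ^ q) (c * u ^ r) ^ 2 =
      heisenbergScalarCurvature a b c ^ 2 / u := by
  have sq_rpow : (u ^ (-1 / 2 : ℝ)) ^ 2 = u⁻¹ := by
    rw [← Real.rpow_mul_natCast hu.le, ← Real.rpow_neg_one]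
    norm_num
  rw [mul_rpow a b c p q r hu, hpqr, mul_pow, sq_rpow, div_eq_mul_inv]

end heisenbergScalarCurvature

theorem hasDerivAt_const_mul_one_add_mul_rpow (K k p : ℝ) {t : ℝ} (ht : 1 + k * t ≠ 0) :
    HasDerivAt (fun t : ℝ => K * (1 + k * t) ^ p)
      (p * (k / (1 + k * t)) * (K * (1 + k * t) ^ p)) t := by
  have affine : HasDerivAt (fun t : ℝ => 1 + k * t) k t := by
    simpa using ((hasDerivAt_id t).const_mul k).const_add 1
  refine ((affine.rpow_const (Or.inl ht)).const_mul K).congr_deriv ?_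
  rw [Real.rpow_sub_one ht]
  ring

open heisenbergScalarCurvature in
theorem heisenberg_explicit_solution_general
    (A0 B0 C0 : ℝ) (hA0 : 0 < A0) (hB0 : 0 < B0) (hC0 : 0 < C0)
    (R0 : ℝ) (hR0 : R0 = -2 * A0 / (B0 * C0))
    (A B C : ℝ → ℝ)
    (hA : A = fun t : ℝ => A0 * (1 + 7 * R0 ^ 2 * t) ^ (-(1 : ℝ) / 14))
    (hB : B = fun t : ℝ => B0 * (1 + 7 * R0 ^ 2 * t) ^ ((3 : ℝ) / 14))
    (hC : C = fun t : ℝ => C0 * (1 + 7 * R0 ^ 2 * t) ^ ((3 : ℝ) / 14)) :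
    A 0 = A0 ∧ B 0 = B0 ∧ C 0 = C0 ∧
    ∀ t : ℝ, 0 < 1 + 7 * R0 ^ 2 * t →
      (0 < A t ∧ 0 < B t ∧ 0 < C t) ∧
      HasDerivAt A (-2 * A t ^ 3 / (B t ^ 2 * C t ^ 2)) t ∧
      HasDerivAt B (6 * A t ^ 2 / (B t * C t ^ 2)) t ∧
      HasDerivAt C (6 * A t ^ 2 / (B t ^ 2 * C t)) t := by
  refine ⟨by simp [hA], by simp [hB], by simp [hC], fun t hu => ?_⟩
  have posA : 0 < A t := by rw [hA]; positivity
  have posB : 0 < B t := by rw [hB]; positivity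
  have posC : 0 < C t := by rw [hC]; positivity
  have curvature_sq : heisenbergScalarCurvature (A t) (B t) (C t) ^ 2 =
      R0 ^ 2 / (1 + 7 * R0 ^ 2 * t) := by
    have initial : R0 = heisenbergScalarCurvature A0 B0 C0 := hR0
    simp only [hA, hB, hC]
    rw [sq_mul_rpow_of_sub_sub_eq_neg_half A0 B0 C0 hu (by norm_num), ← initial]
  have deriv_power {X : ℝ → ℝ} {K p : ℝ} (hX : X = fun t => K * (1 + 7 * R0 ^ 2 * t) ^ p) :
      HasDerivAt X (7 * p * heisenbergScalarCurvature (A t) (B t) (C t) ^ 2 * X t) t := by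
    rw [curvature_sq, hX]
    exact (hasDerivAt_const_mul_one_add_mul_rpow K _ p hu.ne').congr_deriv (by ring)
  refine ⟨⟨posA, posB, posC⟩, (deriv_power hA).congr_deriv ?_,
    (deriv_power hB).congr_deriv ?_, (deriv_power hC).congr_deriv ?_⟩
  · rw [← neg_half_mul_sq_mul_center]
    ring
  · rw [← three_halves_mul_sq_mul_left _ _ posB.ne']
    ring
  · rw [← three_halves_mul_sq_mul_right _ _ posC.ne']
    ring

/-- The explicit solution of the negative cross curvature flow ODE system on the
Heisenberg group: for any initial data `A0, B0, C0 > 0`, the functions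
`A(t) = A0 (1 + 7 R0² t)^{-1/14}`, `B(t) = B0 (1 + 7 R0² t)^{3/14}`,
`C(t) = C0 (1 + 7 R0² t)^{3/14}` with `R0 = -2 A0/(B0 C0)` are positive for all
`t ≥ 0`, take the prescribed initial values, and solve
`A' = -2A³/(B²C²)`, `B' = 6A²/(BC²)`, `C' = 6A²/(B²C)` on `[0, ∞)`. -/
theorem heisenberg_explicit_solution
    (A0 B0 C0 : ℝ) (hA0 : 0 < A0) (hB0 : 0 < B0) (hC0 : 0 < C0)
    (R0 : ℝ) (hR0 : R0 = -2 * A0 / (B0 * C0))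
    (A B C : ℝ → ℝ)
    (hA : A = fun t : ℝ => A0 * (1 + 7 * R0 ^ 2 * t) ^ (-(1 : ℝ) / 14))
    (hB : B = fun t : ℝ => B0 * (1 + 7 * R0 ^ 2 * t) ^ ((3 : ℝ) / 14))
    (hC : C = fun t : ℝ => C0 * (1 + 7 * R0 ^ 2 * t) ^ ((3 : ℝ) / 14)) :
    A 0 = A0 ∧ B 0 = B0 ∧ C 0 = C0 ∧
    ∀ t : ℝ, 0 ≤ t →
      (0 < A t ∧ 0 < B t ∧ 0 < C t) ∧
      HasDerivAt A (-2 * A t ^ 3 / (B t ^ 2 * C t ^ 2)) t ∧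
      HasDerivAt B (6 * A t ^ 2 / (B t * C t ^ 2)) t ∧
      HasDerivAt C (6 * A t ^ 2 / (B t ^ 2 * C t)) t := by
  obtain ⟨initA, initB, initC, solves⟩ :=
    heisenberg_explicit_solution_general A0 B0 C0 hA0 hB0 hC0 R0 hR0 A B C hA hB hC
  exact ⟨initA, initB, initC, fun t ht => solves t (by positivity)⟩
end

section
/- Let A, B, C be positive differentiable functions on an interval [0, T) solving the Heisenberg negative cross curvature flow ODE system with initial values A_0, B_0, C_0 > 0. Then the quantities B/C, A^3 B and A^3 C are constant along the flow: for all t in [0, T), B(t)/C(t) = B_0/C_0, A(t)^3 B(t) = A_0^3 B_0 and A(t)^3 C(t) = A_0^3 C_0. -/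
/-! With `r = 2A²/(B²C²)` the system reads `A' = -r A`, `B' = 3r B`, `C' = 3r C`. The logarithmic
derivatives of `B/C`, `A³B` and `A³C` are therefore `3r - 3r`, `-3r + 3r` and `-3r + 3r`. -/

section LogarithmicDerivative

variable {𝕜 : Type*} [NontriviallyNormedField 𝕜] {s : Set 𝕜} {f g : 𝕜 → 𝕜} {p q x : 𝕜}

lemma hasDerivWithinAt_div_of_eq_mul_self (hf : HasDerivWithinAt f (p * f x) s x)
    (hg : HasDerivWithinAt g (q * g x) s x) (hgx : g x ≠ 0) :
    HasDerivWithinAt (fun y => f y / g y) ((p - q) * (f x / g x)) s x := by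
  refine (hf.fun_div hg hgx).congr_deriv ?_
  field_simp

lemma hasDerivWithinAt_pow_mul_of_eq_mul_self (n : ℕ) (hf : HasDerivWithinAt f (p * f x) s x)
    (hg : HasDerivWithinAt g (q * g x) s x) :
    HasDerivWithinAt (fun y => f y ^ n * g y) ((n * p + q) * (f x ^ n * g x)) s x := by
  refine ((hf.fun_pow n).fun_mul hg).congr_deriv ?_
  cases n with
  | zero => simp
  | succ n => rw [Nat.add_sub_cancel]; ring

end LogarithmicDerivative

section Conservation

variable {𝕜 : Type*} [RCLike 𝕜] {s : Set 𝕜} {x y : 𝕜}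

lemma eq_of_hasDerivWithinAt_zero {E : Type*} [NormedAddCommGroup E] [NormedSpace 𝕜 E] {f : 𝕜 → E}
    (hs : Convex ℝ s) (hf : ∀ t ∈ s, HasDerivWithinAt f 0 s t) (hx : x ∈ s) (hy : y ∈ s) :
    f x = f y := by
  have hbound : ‖f x - f y‖ ≤ 0 * ‖x - y‖ :=
    hs.norm_image_sub_le_of_norm_hasDerivWithin_le hf (fun _ _ => norm_zero.le) hy hx
  rwa [zero_mul, norm_le_zero_iff, sub_eq_zero] at hbound

variable {f g p : 𝕜 → 𝕜}

lemma div_eq_div_of_hasDerivWithinAt_eq_mul_self (hs : Convex ℝ s)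
    (hf : ∀ t ∈ s, HasDerivWithinAt f (p t * f t) s t)
    (hg : ∀ t ∈ s, HasDerivWithinAt g (p t * g t) s t) (hg0 : ∀ t ∈ s, g t ≠ 0)
    (hx : x ∈ s) (hy : y ∈ s) : f x / g x = f y / g y := by
  refine eq_of_hasDerivWithinAt_zero (f := fun t => f t / g t) hs (fun t ht => ?_) hx hy
  simpa using hasDerivWithinAt_div_of_eq_mul_self (hf t ht) (hg t ht) (hg0 t ht)

lemma pow_mul_eq_pow_mul_of_hasDerivWithinAt_neg_mul_self (n : ℕ) (hs : Convex ℝ s)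
    (hf : ∀ t ∈ s, HasDerivWithinAt f (-p t * f t) s t)
    (hg : ∀ t ∈ s, HasDerivWithinAt g (n * p t * g t) s t) (hx : x ∈ s) (hy : y ∈ s) :
    f x ^ n * g x = f y ^ n * g y := by
  refine eq_of_hasDerivWithinAt_zero (f := fun t => f t ^ n * g t) hs (fun t ht => ?_) hx hy
  simpa using hasDerivWithinAt_pow_mul_of_eq_mul_self n (hf t ht) (hg t ht)

end Conservation

theorem heisenberg_conserved_quantities_general {𝕜 : Type*} [RCLike 𝕜] {s : Set 𝕜}
    (hs : Convex ℝ s) {A B C : 𝕜 → 𝕜} (hB : ∀ t ∈ s, B t ≠ 0) (hC : ∀ t ∈ s, C t ≠ 0)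
    (hA' : ∀ t ∈ s, HasDerivWithinAt A (-2 * A t ^ 3 / (B t ^ 2 * C t ^ 2)) s t)
    (hB' : ∀ t ∈ s, HasDerivWithinAt B (6 * A t ^ 2 / (B t * C t ^ 2)) s t)
    (hC' : ∀ t ∈ s, HasDerivWithinAt C (6 * A t ^ 2 / (B t ^ 2 * C t)) s t)
    {x y : 𝕜} (hx : x ∈ s) (hy : y ∈ s) :
    B x / C x = B y / C y ∧ A x ^ 3 * B x = A y ^ 3 * B y ∧ A x ^ 3 * C x = A y ^ 3 * C y := by
  let r : 𝕜 → 𝕜 := fun t => 2 * A t ^ 2 / (B t ^ 2 * C t ^ 2)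
  have hAr : ∀ t ∈ s, HasDerivWithinAt A (-r t * A t) s t := fun t ht =>
    (hA' t ht).congr_deriv (by simp only [r]; ring)
  have hBr : ∀ t ∈ s, HasDerivWithinAt B ((3 : ℕ) * r t * B t) s t := fun t ht =>
    (hB' t ht).congr_deriv (by have := hB t ht; simp only [r]; push_cast; field_simp; ring)
  have hCr : ∀ t ∈ s, HasDerivWithinAt C ((3 : ℕ) * r t * C t) s t := fun t ht =>
    (hC' t ht).congr_deriv (by have := hC t ht; simp only [r]; push_cast; field_simp; ring)
  exact ⟨div_eq_div_of_hasDerivWithinAt_eq_mul_self hs hBr hCr hC hx hy,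
    pow_mul_eq_pow_mul_of_hasDerivWithinAt_neg_mul_self 3 hs hAr hBr hx hy,
    pow_mul_eq_pow_mul_of_hasDerivWithinAt_neg_mul_self 3 hs hAr hCr hx hy⟩

/-- Along any positive solution of the negative cross curvature flow ODE system on the
Heisenberg group (`A' = -2A³/(B²C²)`, `B' = 6A²/(BC²)`, `C' = 6A²/(B²C)`) on `[0, T)`,
the quantities `B/C`, `A³B` and `A³C` are conserved. -/
theorem heisenberg_conserved_quantities
    (T A0 B0 C0 : ℝ) (hT : 0 < T)
    (hA0 : 0 < A0) (hB0 : 0 < B0) (hC0 : 0 < C0)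
    (A B C : ℝ → ℝ)
    (hinitA : A 0 = A0) (hinitB : B 0 = B0) (hinitC : C 0 = C0)
    (hsol : ∀ t ∈ Set.Ico (0 : ℝ) T,
      (0 < A t ∧ 0 < B t ∧ 0 < C t) ∧
      HasDerivAt A (-2 * A t ^ 3 / (B t ^ 2 * C t ^ 2)) t ∧
      HasDerivAt B (6 * A t ^ 2 / (B t * C t ^ 2)) t ∧
      HasDerivAt C (6 * A t ^ 2 / (B t ^ 2 * C t)) t) :
    ∀ t ∈ Set.Ico (0 : ℝ) T,
      B t / C t = B0 / C0 ∧
      A t ^ 3 * B t = A0 ^ 3 * B0 ∧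
      A t ^ 3 * C t = A0 ^ 3 * C0 := by
  subst hinitA hinitB hinitC
  choose hpos hA' hB' hC' using hsol
  exact fun t ht => heisenberg_conserved_quantities_general (convex_Ico 0 T)
    (fun u hu => (hpos u hu).2.1.ne') (fun u hu => (hpos u hu).2.2.ne')
    (fun u hu => (hA' u hu).hasDerivWithinAt) (fun u hu => (hB' u hu).hasDerivWithinAt)
    (fun u hu => (hC' u hu).hasDerivWithinAt) ht ⟨le_rfl, hT⟩
end

section
/- For initial data with A_0 = C_0 > 0 and B_0 > 0, the functions B(t) = sqrt(B_0^2 - 64 t) and A(t) = C(t) = A_0 B_0 / sqrt(B_0^2 - 64 t) are defined and positive on [0, B_0^2/64), take the given initial values at t = 0, and solve the E(1,1) negative cross curvature flow ODE system on [0, B_0^2/64). -/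
/-!
Along `A = C` the system collapses to `A' = 32 A / B ^ 2` and `B' = -32 / B`. The second equation
says `(B ^ 2)' = -64`, so `B = √(B0 ^ 2 - 64 t)`. Then `(A B)' = 0`, so `A = A0 B0 / B`.
-/

/-- The negative cross curvature flow on `E(1,1)` at time `t`, for the coefficients `A`, `B`, `C`
of a left-invariant metric in a Milnor frame. The derivatives are two-sided, and the equations are
meaningful only where `A t * B t * C t ≠ 0`. -/
def IsE11NegCrossCurvatureFlowAt (A B C : ℝ → ℝ) (t : ℝ) : Prop :=
  HasDerivAt A
    (2 * A t * (A t + C t) ^ 3 * (3 * C t - A t) / (A t * B t * C t) ^ 2) t ∧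
  HasDerivAt B
    (-2 * B t * (3 * A t - C t) * (3 * C t - A t) * (A t + C t) ^ 2 /
      (A t * B t * C t) ^ 2) t ∧
  HasDerivAt C
    (2 * C t * (A t + C t) ^ 3 * (3 * A t - C t) / (A t * B t * C t) ^ 2) t

theorem isE11NegCrossCurvatureFlowAt_symmetric_iff {A B : ℝ → ℝ} {t : ℝ}
    (hA : A t ≠ 0) (hB : B t ≠ 0) :
    IsE11NegCrossCurvatureFlowAt A B A t ↔
      HasDerivAt A (32 * A t / B t ^ 2) t ∧ HasDerivAt B (-32 / B t) t := by
  have rhs_A : 2 * A t * (A t + A t) ^ 3 * (3 * A t - A t) / (A t * B t * A t) ^ 2 =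
      32 * A t / B t ^ 2 := by
    field_simp
    ring
  have rhs_B : -2 * B t * (3 * A t - A t) * (3 * A t - A t) * (A t + A t) ^ 2 /
      (A t * B t * A t) ^ 2 = -32 / B t := by
    field_simp
    ring
  rw [IsE11NegCrossCurvatureFlowAt, rhs_A, rhs_B]
  tauto

theorem hasDerivAt_sqrt_sub_mul {b k t : ℝ} (h : b - k * t ≠ 0) :
    HasDerivAt (fun s => √(b - k * s)) (-k / (2 * √(b - k * t))) t :=
  ((hasDerivAt_const_mul k).const_sub b).sqrt h

theorem hasDerivAt_const_div_of_hasDerivAt_neg_div {𝕜 : Type*} [NontriviallyNormedField 𝕜]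
    {B : 𝕜 → 𝕜} {k t : 𝕜} (c : 𝕜) (hB : HasDerivAt B (-k / B t) t) (hBt : B t ≠ 0) :
    HasDerivAt (fun s => c / B s) (k * (c / B t) / B t ^ 2) t := by
  refine ((hasDerivAt_const t c).fun_div hB hBt).congr_deriv ?_
  field_simp
  ring

theorem isE11NegCrossCurvatureFlowAt_const_div {B : ℝ → ℝ} {c t : ℝ} (hc : c ≠ 0)
    (hB : HasDerivAt B (-32 / B t) t) (hBt : B t ≠ 0) :
    IsE11NegCrossCurvatureFlowAt (fun s => c / B s) B (fun s => c / B s) t :=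
  (isE11NegCrossCurvatureFlowAt_symmetric_iff (A := fun s => c / B s)
    (div_ne_zero hc hBt) hBt).2
    ⟨hasDerivAt_const_div_of_hasDerivAt_neg_div c hB hBt, hB⟩

theorem isE11NegCrossCurvatureFlowAt_const_div_sqrt {b c t : ℝ} (hc : c ≠ 0)
    (ht : 0 < b - 64 * t) :
    IsE11NegCrossCurvatureFlowAt (fun s => c / √(b - 64 * s)) (fun s => √(b - 64 * s))
      (fun s => c / √(b - 64 * s)) t := by
  have hB : HasDerivAt (fun s => √(b - 64 * s)) (-32 / √(b - 64 * t)) t :=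
    (hasDerivAt_sqrt_sub_mul ht.ne').congr_deriv (by ring)
  exact isE11NegCrossCurvatureFlowAt_const_div hc hB (Real.sqrt_pos.2 ht).ne'

theorem sol_E11_symmetric_solution_general
    (A0 B0 : ℝ) (hA0 : 0 < A0) (hB0 : 0 < B0)
    (A B C : ℝ → ℝ)
    (hB : B = fun t : ℝ => Real.sqrt (B0 ^ 2 - 64 * t))
    (hA : A = fun t : ℝ => A0 * B0 / Real.sqrt (B0 ^ 2 - 64 * t))
    (hC : C = A) :
    A 0 = A0 ∧ B 0 = B0 ∧ C 0 = A0 ∧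
    ∀ t ∈ Set.Iio (B0 ^ 2 / 64),
      (0 < A t ∧ 0 < B t ∧ 0 < C t) ∧ IsE11NegCrossCurvatureFlowAt A B C t := by
  subst hC hA hB
  have sqrt_initial : √(B0 ^ 2 - 64 * 0) = B0 := by
    rw [mul_zero, sub_zero, Real.sqrt_sq hB0.le]
  have div_initial : A0 * B0 / √(B0 ^ 2 - 64 * 0) = A0 := by
    rw [sqrt_initial, mul_div_cancel_right₀ A0 hB0.ne']
  refine ⟨div_initial, sqrt_initial, div_initial, fun t ht => ?_⟩
  have radicand_pos : 0 < B0 ^ 2 - 64 * t := by linarith [Set.mem_Iio.1 ht]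
  have sqrt_pos : 0 < √(B0 ^ 2 - 64 * t) := Real.sqrt_pos.2 radicand_pos
  have div_pos : 0 < A0 * B0 / √(B0 ^ 2 - 64 * t) := by positivity
  exact ⟨⟨div_pos, sqrt_pos, div_pos⟩,
    isE11NegCrossCurvatureFlowAt_const_div_sqrt (mul_pos hA0 hB0).ne' radicand_pos⟩

/-- For initial data with `A0 = C0 > 0` and `B0 > 0`, the functions
`B(t) = √(B0² - 64t)` and `A(t) = C(t) = A0 B0/√(B0² - 64t)` are positive on
`[0, B0²/64)`, take the given initial values, and solve the `E(1,1)` negative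
cross curvature flow ODE system there. -/
theorem sol_E11_symmetric_solution
    (A0 B0 : ℝ) (hA0 : 0 < A0) (hB0 : 0 < B0)
    (A B C : ℝ → ℝ)
    (hB : B = fun t : ℝ => Real.sqrt (B0 ^ 2 - 64 * t))
    (hA : A = fun t : ℝ => A0 * B0 / Real.sqrt (B0 ^ 2 - 64 * t))
    (hC : C = A) :
    A 0 = A0 ∧ B 0 = B0 ∧ C 0 = A0 ∧
    ∀ t ∈ Set.Ico (0 : ℝ) (B0 ^ 2 / 64),
      (0 < A t ∧ 0 < B t ∧ 0 < C t) ∧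
      HasDerivAt A
        (2 * A t * (A t + C t) ^ 3 * (3 * C t - A t) / (A t * B t * C t) ^ 2) t ∧
      HasDerivAt B
        (-2 * B t * (3 * A t - C t) * (3 * C t - A t) * (A t + C t) ^ 2 /
          (A t * B t * C t) ^ 2) t ∧
      HasDerivAt C
        (2 * C t * (A t + C t) ^ 3 * (3 * A t - C t) / (A t * B t * C t) ^ 2) t := by
  obtain ⟨hA_zero, hB_zero, hC_zero, hflow⟩ :=
    sol_E11_symmetric_solution_general A0 B0 hA0 hB0 A B C hB hA hC
  exact ⟨hA_zero, hB_zero, hC_zero, fun t ht => hflow t ht.2⟩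
end

section
/- Let A, B, C be positive differentiable functions on an interval [0, T) solving the E(1,1) negative cross curvature flow ODE system with A_0 > C_0 > 0. Then for all t in [0, T): A(t) > C(t), and the functions A - C, A/C and A - 3C are (weakly) decreasing on [0, T); moreover d(A-C)/dt = -2 (A+C)^4 (A-C)/(ABC)^2 and d(ln(A/C))/dt = -8 (A+C)^3 (A-C)/(ABC)^2. -/
/-!
The function `B` enters the equations for `A` and `C` only through the common factor `1 / (ABC)²`,
that is, as a time change. The difference `A - C` solves the linear equation `u' = -k u` with
`k = 2 (A + C)⁴ / (ABC)²`, so it is `A 0 - C 0` times an exponential and stays positive. Once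
`A > C` is known, the derivatives of `A - C`, `A / C` and `A - 3C` have the right sign by algebra.
-/

open Set

section LinearODE

variable {E : Type*} [NormedAddCommGroup E] [NormedSpace ℝ E] {a b : ℝ}

lemma hasDerivWithinAt_integral_Ici_of_continuousOn_Icc [CompleteSpace E] {f : ℝ → E} {t : ℝ}
    (hf : ContinuousOn f (Icc a b)) (ht : t ∈ Ico a b) :
    HasDerivWithinAt (fun y => ∫ x in a..y, f x) (f t) (Ici t) t := by
  have hnhds : Icc a b ∈ nhdsWithin t (Ioi t) :=
    Filter.mem_of_superset (Ioo_mem_nhdsGT ht.2) fun x hx => ⟨ht.1.trans hx.1.le, hx.2.le⟩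
  exact intervalIntegral.integral_hasDerivWithinAt_right
    ((hf.mono (Icc_subset_Icc_right ht.2.le)).intervalIntegrable_of_Icc ht.1)
    ⟨Icc a b, hnhds, hf.aestronglyMeasurable measurableSet_Icc⟩
    ((hf t (Ico_subset_Icc_self ht)).mono_of_mem_nhdsWithin hnhds)

lemma eq_exp_integral_smul_of_hasDerivWithinAt_Ici {u : ℝ → E} {k : ℝ → ℝ}
    (hk : ContinuousOn k (Icc a b)) (hu : ContinuousOn u (Icc a b))
    (hu' : ∀ t ∈ Ico a b, HasDerivWithinAt u (k t • u t) (Ici t) t) :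
    ∀ t ∈ Icc a b, u t = Real.exp (∫ x in a..t, k x) • u a := by
  intro t ht
  have hab : a ≤ b := ht.1.trans ht.2
  have hprim : ContinuousOn (fun y => ∫ x in a..y, k x) (Icc a b) := by
    simpa only [uIcc_of_le hab] using intervalIntegral.continuousOn_primitive_interval'
      (hk.intervalIntegrable_of_Icc hab) left_mem_uIcc
  have hcont : ContinuousOn (fun y => Real.exp (-∫ x in a..y, k x) • u y) (Icc a b) :=
    hprim.neg.rexp.smul hu
  have hderiv : ∀ y ∈ Ico a b,
      HasDerivWithinAt (fun y => Real.exp (-∫ x in a..y, k x) • u y) 0 (Ici y) y := fun y hy =>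
    ((hasDerivWithinAt_integral_Ici_of_continuousOn_Icc hk hy).neg.exp.smul
      (hu' y hy)).congr_deriv (by module)
  have hconst : Real.exp (-∫ x in a..t, k x) • u t = u a := by
    simpa only [intervalIntegral.integral_same, neg_zero, Real.exp_zero, one_smul] using
      constant_of_has_deriv_right_zero hcont hderiv t ht
  rw [← hconst, smul_smul, ← Real.exp_add, add_neg_cancel, Real.exp_zero, one_smul]

lemma pos_on_Ico_of_hasDerivAt_mul_self {u k : ℝ → ℝ} (hk : ContinuousOn k (Ico a b))
    (hu : ∀ t ∈ Ico a b, HasDerivAt u (k t * u t) t) (ha : 0 < u a) :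
    ∀ t ∈ Ico a b, 0 < u t := by
  intro t ht
  have hsub : Icc a t ⊆ Ico a b := Icc_subset_Ico_right ht.2
  rw [eq_exp_integral_smul_of_hasDerivWithinAt_Ici (hk.mono hsub)
    (fun s hs => (hu s (hsub hs)).continuousAt.continuousWithinAt)
    (fun s hs => (hu s (hsub (Ico_subset_Icc_self hs))).hasDerivWithinAt) t (right_mem_Icc.2 ht.1)]
  exact smul_pos (Real.exp_pos _) ha

end LinearODE

lemma antitoneOn_of_hasDerivAt_nonpos {f f' : ℝ → ℝ} {s : Set ℝ} (hs : Convex ℝ s)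
    (hf : ∀ t ∈ s, HasDerivAt f (f' t) t) (hf' : ∀ t ∈ s, f' t ≤ 0) : AntitoneOn f s :=
  antitoneOn_of_hasDerivWithinAt_nonpos hs
    (fun t ht => (hf t ht).continuousAt.continuousWithinAt)
    (fun t ht => (hf t (interior_subset ht)).hasDerivWithinAt)
    (fun t ht => hf' t (interior_subset ht))

/-- `A` and `C` solve, at every point of `s`, their equations in the `E(1,1)` negative cross
curvature flow, with the common denominator `(ABC)²` replaced by an arbitrary positive
function `D`, since `B` plays no other role in them. -/
structure IsE11FlowOn (A C D : ℝ → ℝ) (s : Set ℝ) : Prop where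
  denom_pos : ∀ t ∈ s, 0 < D t
  hasDerivAt_left : ∀ t ∈ s,
    HasDerivAt A (2 * A t * (A t + C t) ^ 3 * (3 * C t - A t) / D t) t
  hasDerivAt_right : ∀ t ∈ s,
    HasDerivAt C (2 * C t * (A t + C t) ^ 3 * (3 * A t - C t) / D t) t

namespace IsE11FlowOn

variable {A C D : ℝ → ℝ} {s : Set ℝ} {t a b : ℝ}

lemma continuousOn_left (h : IsE11FlowOn A C D s) : ContinuousOn A s := fun t ht =>
  (h.hasDerivAt_left t ht).continuousAt.continuousWithinAt

lemma continuousOn_right (h : IsE11FlowOn A C D s) : ContinuousOn C s := fun t ht =>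
  (h.hasDerivAt_right t ht).continuousAt.continuousWithinAt

lemma hasDerivAt_sub (h : IsE11FlowOn A C D s) (ht : t ∈ s) :
    HasDerivAt (fun x => A x - C x) (-2 * (A t + C t) ^ 4 * (A t - C t) / D t) t :=
  ((h.hasDerivAt_left t ht).sub (h.hasDerivAt_right t ht)).congr_deriv (by ring)

lemma hasDerivAt_sub_three_mul (h : IsE11FlowOn A C D s) (ht : t ∈ s) :
    HasDerivAt (fun x => A x - 3 * C x)
      (-2 * (A t + C t) ^ 3 * (A t ^ 2 + 6 * A t * C t - 3 * C t ^ 2) / D t) t :=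
  ((h.hasDerivAt_left t ht).sub ((h.hasDerivAt_right t ht).const_mul 3)).congr_deriv (by ring)

lemma hasDerivAt_div (h : IsE11FlowOn A C D s) (ht : t ∈ s) (hC : C t ≠ 0) :
    HasDerivAt (fun x => A x / C x)
      (A t / C t * (-8 * (A t + C t) ^ 3 * (A t - C t) / D t)) t :=
  ((h.hasDerivAt_left t ht).div (h.hasDerivAt_right t ht) hC).congr_deriv (by field_simp; ring)

lemma hasDerivAt_log_div (h : IsE11FlowOn A C D s) (ht : t ∈ s) (hA : A t ≠ 0) (hC : C t ≠ 0) :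
    HasDerivAt (fun x => Real.log (A x / C x))
      (-8 * (A t + C t) ^ 3 * (A t - C t) / D t) t :=
  have hAC : A t / C t ≠ 0 := div_ne_zero hA hC
  ((h.hasDerivAt_div ht hC).log hAC).congr_deriv (mul_div_cancel_left₀ _ hAC)

lemma right_lt_left (h : IsE11FlowOn A C D (Ico a b)) (hD : ContinuousOn D (Ico a b))
    (ha : C a < A a) : ∀ t ∈ Ico a b, C t < A t := by
  have hcoeff : ContinuousOn (fun t => -2 * (A t + C t) ^ 4 / D t) (Ico a b) :=
    (continuousOn_const.mul ((h.continuousOn_left.add h.continuousOn_right).pow 4)).div hD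
      fun t ht => (h.denom_pos t ht).ne'
  have hlinear : ∀ t ∈ Ico a b,
      HasDerivAt (fun x => A x - C x) (-2 * (A t + C t) ^ 4 / D t * (A t - C t)) t :=
    fun t ht => (h.hasDerivAt_sub ht).congr_deriv (by ring)
  exact fun t ht =>
    sub_pos.1 (pos_on_Ico_of_hasDerivAt_mul_self hcoeff hlinear (sub_pos.2 ha) t ht)

lemma antitoneOn_sub (h : IsE11FlowOn A C D s) (hs : Convex ℝ s)
    (hCA : ∀ t ∈ s, C t ≤ A t) : AntitoneOn (fun t => A t - C t) s := by
  refine antitoneOn_of_hasDerivAt_nonpos hs (fun t ht => h.hasDerivAt_sub ht) fun t ht => ?_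
  have hsub : 0 ≤ A t - C t := sub_nonneg.2 (hCA t ht)
  have hpow : 0 ≤ (A t + C t) ^ 4 := by positivity
  exact div_nonpos_of_nonpos_of_nonneg (by linarith [mul_nonneg hpow hsub]) (h.denom_pos t ht).le

lemma antitoneOn_div (h : IsE11FlowOn A C D s) (hs : Convex ℝ s)
    (hC : ∀ t ∈ s, 0 < C t) (hCA : ∀ t ∈ s, C t ≤ A t) :
    AntitoneOn (fun t => A t / C t) s := by
  refine antitoneOn_of_hasDerivAt_nonpos hs (fun t ht => h.hasDerivAt_div ht (hC t ht).ne')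
    fun t ht => ?_
  have hCt : 0 < C t := hC t ht
  have hAt : 0 < A t := hCt.trans_le (hCA t ht)
  have hsub : 0 ≤ A t - C t := sub_nonneg.2 (hCA t ht)
  have hpow : 0 ≤ (A t + C t) ^ 3 := by positivity
  exact mul_nonpos_of_nonneg_of_nonpos (by positivity)
    (div_nonpos_of_nonpos_of_nonneg (by linarith [mul_nonneg hpow hsub]) (h.denom_pos t ht).le)

lemma antitoneOn_sub_three_mul (h : IsE11FlowOn A C D s) (hs : Convex ℝ s)
    (hC : ∀ t ∈ s, 0 ≤ C t) (hCA : ∀ t ∈ s, C t ≤ A t) :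
    AntitoneOn (fun t => A t - 3 * C t) s := by
  refine antitoneOn_of_hasDerivAt_nonpos hs (fun t ht => h.hasDerivAt_sub_three_mul ht)
    fun t ht => ?_
  have hCt : 0 ≤ C t := hC t ht
  have hAt : 0 ≤ A t := hCt.trans (hCA t ht)
  have hquad : 0 ≤ A t ^ 2 + 6 * A t * C t - 3 * C t ^ 2 := by
    nlinarith [mul_nonneg hCt (sub_nonneg.2 (hCA t ht)), sq_nonneg (A t), sq_nonneg (C t)]
  have hpow : 0 ≤ (A t + C t) ^ 3 := by positivity
  exact div_nonpos_of_nonpos_of_nonneg (by linarith [mul_nonneg hpow hquad]) (h.denom_pos t ht).le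

end IsE11FlowOn

theorem sol_E11_monotone_quantities_general {A B C : ℝ → ℝ} {a b : ℝ}
    (hpos : ∀ t ∈ Ico a b, 0 < A t ∧ 0 < B t ∧ 0 < C t) (hB : ContinuousOn B (Ico a b))
    (hA' : ∀ t ∈ Ico a b, HasDerivAt A
      (2 * A t * (A t + C t) ^ 3 * (3 * C t - A t) / (A t * B t * C t) ^ 2) t)
    (hC' : ∀ t ∈ Ico a b, HasDerivAt C
      (2 * C t * (A t + C t) ^ 3 * (3 * A t - C t) / (A t * B t * C t) ^ 2) t)
    (ha : C a < A a) :
    (∀ t ∈ Ico a b, C t < A t) ∧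
    AntitoneOn (fun t => A t - C t) (Ico a b) ∧
    AntitoneOn (fun t => A t / C t) (Ico a b) ∧
    AntitoneOn (fun t => A t - 3 * C t) (Ico a b) ∧
    ∀ t ∈ Ico a b,
      HasDerivAt (fun s => A s - C s)
        (-2 * (A t + C t) ^ 4 * (A t - C t) / (A t * B t * C t) ^ 2) t ∧
      HasDerivAt (fun s => Real.log (A s / C s))
        (-8 * (A t + C t) ^ 3 * (A t - C t) / (A t * B t * C t) ^ 2) t := by
  have hD_pos : ∀ t ∈ Ico a b, 0 < (A t * B t * C t) ^ 2 := fun t ht => by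
    obtain ⟨hAt, hBt, hCt⟩ := hpos t ht
    positivity
  have hflow : IsE11FlowOn A C (fun t => (A t * B t * C t) ^ 2) (Ico a b) := ⟨hD_pos, hA', hC'⟩
  have hD : ContinuousOn (fun t => (A t * B t * C t) ^ 2) (Ico a b) :=
    ((hflow.continuousOn_left.mul hB).mul hflow.continuousOn_right).pow 2
  have hC : ∀ t ∈ Ico a b, 0 < C t := fun t ht => (hpos t ht).2.2
  have hCA : ∀ t ∈ Ico a b, C t < A t := hflow.right_lt_left hD ha
  have hCA_le : ∀ t ∈ Ico a b, C t ≤ A t := fun t ht => (hCA t ht).le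
  have hI : Convex ℝ (Ico a b) := convex_Ico a b
  exact ⟨hCA, hflow.antitoneOn_sub hI hCA_le, hflow.antitoneOn_div hI hC hCA_le,
    hflow.antitoneOn_sub_three_mul hI (fun t ht => (hC t ht).le) hCA_le,
    fun t ht => ⟨hflow.hasDerivAt_sub ht,
      hflow.hasDerivAt_log_div ht (hpos t ht).1.ne' (hC t ht).ne'⟩⟩

/-- Along a positive solution of the `E(1,1)` negative cross curvature flow ODE system
on `[0, T)` with `A0 > C0 > 0`: one has `A > C`, the quantities `A - C`, `A/C`, `A - 3C`
are (weakly) decreasing, and the stated derivative formulas for `A - C` and `ln(A/C)`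
hold. -/
theorem sol_E11_monotone_quantities
    (T A0 B0 C0 : ℝ) (hT : 0 < T)
    (hB0 : 0 < B0) (hC0 : 0 < C0) (hA0C0 : A0 > C0)
    (A B C : ℝ → ℝ)
    (hinitA : A 0 = A0) (hinitB : B 0 = B0) (hinitC : C 0 = C0)
    (hsol : ∀ t ∈ Set.Ico (0 : ℝ) T,
      (0 < A t ∧ 0 < B t ∧ 0 < C t) ∧
      HasDerivAt A
        (2 * A t * (A t + C t) ^ 3 * (3 * C t - A t) / (A t * B t * C t) ^ 2) t ∧
      HasDerivAt B
        (-2 * B t * (3 * A t - C t) * (3 * C t - A t) * (A t + C t) ^ 2 /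
          (A t * B t * C t) ^ 2) t ∧
      HasDerivAt C
        (2 * C t * (A t + C t) ^ 3 * (3 * A t - C t) / (A t * B t * C t) ^ 2) t) :
    (∀ t ∈ Set.Ico (0 : ℝ) T, A t > C t) ∧
    AntitoneOn (fun t => A t - C t) (Set.Ico (0 : ℝ) T) ∧
    AntitoneOn (fun t => A t / C t) (Set.Ico (0 : ℝ) T) ∧
    AntitoneOn (fun t => A t - 3 * C t) (Set.Ico (0 : ℝ) T) ∧
    ∀ t ∈ Set.Ico (0 : ℝ) T,
      HasDerivAt (fun s => A s - C s)
        (-2 * (A t + C t) ^ 4 * (A t - C t) / (A t * B t * C t) ^ 2) t ∧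
      HasDerivAt (fun s => Real.log (A s / C s))
        (-8 * (A t + C t) ^ 3 * (A t - C t) / (A t * B t * C t) ^ 2) t :=
  sol_E11_monotone_quantities_general (fun t ht => (hsol t ht).1)
    (fun t ht => (hsol t ht).2.2.1.continuousAt.continuousWithinAt)
    (fun t ht => (hsol t ht).2.1) (fun t ht => (hsol t ht).2.2.2) (by rwa [hinitA, hinitC])
end

section
/- For all real numbers A ≥ B ≥ C > 0, the quantities Y = 3B^2 - (A-C)^2 - 2AB - 2BC and Z = 3C^2 - (A-B)^2 - 2BC - 2AC satisfy Y ≤ -C^2 < 0 and Z ≤ -C^2 < 0. -/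
section CommRing

variable {R : Type*} [CommRing R]

/-- The factor `Y` of the cross curvature tensor of a left-invariant metric on `SU(2)` in a Milnor
frame, as a polynomial in the metric coefficients `A`, `B`, `C` over any commutative ring. -/
def su2Y (A B C : R) : R :=
  3 * B ^ 2 - (A - C) ^ 2 - 2 * A * B - 2 * B * C

/-- The factor `Z` of the cross curvature tensor of a left-invariant metric on `SU(2)` in a Milnor
frame, as a polynomial in the metric coefficients `A`, `B`, `C` over any commutative ring. -/
def su2Z (A B C : R) : R :=
  3 * C ^ 2 - (A - B) ^ 2 - 2 * B * C - 2 * A * C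

theorem su2Y_eq_neg_sq_sub (A B C : R) :
    su2Y A B C = -C ^ 2 - (A - B) * (A + 3 * B - 2 * C) := by
  unfold su2Y
  ring

theorem su2Z_eq_neg_sq_sub (A B C : R) :
    su2Z A B C = -C ^ 2 - ((A - B) ^ 2 + 2 * C * (A + B - 2 * C)) := by
  unfold su2Z
  ring

end CommRing

section OrderedRing

variable {R : Type*} [CommRing R] [LinearOrder R] {A B C : R}

theorem su2Y_le_neg_sq [IsOrderedRing R] (hBA : B ≤ A) (hC : 2 * C ≤ A + 3 * B) :
    su2Y A B C ≤ -C ^ 2 := by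
  rw [su2Y_eq_neg_sq_sub]
  exact sub_le_self _ (mul_nonneg (sub_nonneg.mpr hBA) (sub_nonneg.mpr hC))

theorem su2Z_le_neg_sq [IsOrderedRing R] (hC : 0 ≤ C) (hCAB : 2 * C ≤ A + B) :
    su2Z A B C ≤ -C ^ 2 := by
  have hprod : 0 ≤ 2 * C * (A + B - 2 * C) :=
    mul_nonneg (mul_nonneg zero_le_two hC) (sub_nonneg.mpr hCAB)
  rw [su2Z_eq_neg_sq_sub]
  exact sub_le_self _ (add_nonneg (sq_nonneg _) hprod)

theorem su2_YZ_negative_general [IsStrictOrderedRing R]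
    (hC : 0 < C) (hB : 0 ≤ B) (hBA : B ≤ A) (hCAB : 2 * C ≤ A + B) :
    (su2Y A B C ≤ -C ^ 2 ∧ su2Z A B C ≤ -C ^ 2) ∧ -C ^ 2 < 0 :=
  ⟨⟨su2Y_le_neg_sq hBA (by linarith), su2Z_le_neg_sq hC.le hCAB⟩,
    neg_neg_of_pos (pow_pos hC 2)⟩

end OrderedRing

/-- For `A ≥ B ≥ C > 0`, the quantities `Y = 3B² - (A-C)² - 2AB - 2BC` and
`Z = 3C² - (A-B)² - 2BC - 2AC` appearing in the `SU(2)` cross curvature tensor satisfy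
`Y ≤ -C² < 0` and `Z ≤ -C² < 0`. -/
theorem su2_YZ_negative
    (A B C : ℝ) (hC : 0 < C) (hBC : B ≥ C) (hAB : A ≥ B) :
    (3 * B ^ 2 - (A - C) ^ 2 - 2 * A * B - 2 * B * C ≤ -C ^ 2 ∧
      3 * C ^ 2 - (A - B) ^ 2 - 2 * B * C - 2 * A * C ≤ -C ^ 2) ∧
    -C ^ 2 < 0 := by
  exact su2_YZ_negative_general hC (hC.le.trans hBC) hAB (by linarith)
end
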